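/- For all nonnegative integers N, p(⌊3N/2⌋ - 1, 3, N) - p(⌊3N/2⌋ - 2, 3, N) equals 0 if N ≡ 0 (mod 4) and 1 if N ≡ 1, 2, or 3 (mod 4). -/

import Mathlib

/-- `pBdd n m N` is the number of partitions of `n` into at most `m` parts,
each part at most `N`; it is `0` for negative `n`. -/
noncomputable def pBdd (n : ℤ) (m N : ℕ) : ℕ :=
  if 0 ≤ n then
    Nat.card {π : Nat.Partition n.toNat //
      Multiset.card π.parts ≤ m ∧ ∀ i ∈ π.parts, i ≤ N}
  else 0

/-- `pAtMost n m` is the number of partitions of `n` into at most `m` parts;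
it is `0` for negative `n`. -/
noncomputable def pAtMost (n : ℤ) (m : ℕ) : ℕ :=
  if 0 ≤ n then
    Nat.card {π : Nat.Partition n.toNat // Multiset.card π.parts ≤ m}
  else 0

/-- Triples `N ≥ a ≥ b ≥ c` with sum `n`. -/
def triS (n N : ℕ) : Finset (ℕ × ℕ × ℕ) :=
  (Finset.range (N+1) ×ˢ Finset.range (N+1) ×ˢ Finset.range (N+1)).filter
    (fun t => t.2.1 ≤ t.1 ∧ t.2.2 ≤ t.2.1 ∧ t.1 + t.2.1 + t.2.2 = n)

lemma mem_triS (n N a b c : ℕ) :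
    (a, b, c) ∈ triS n N ↔ a ≤ N ∧ b ≤ a ∧ c ≤ b ∧ a + b + c = n := by
  simp [triS]; omega

lemma tri_inj (a b c a' b' c' : ℕ) (h1 : b ≤ a) (h2 : c ≤ b) (h1' : b' ≤ a') (h2' : c' ≤ b')
    (h : ({a, b, c} : Multiset ℕ).filter (· ≠ 0) = ({a', b', c'} : Multiset ℕ).filter (· ≠ 0)) :
    a = a' ∧ b = b' ∧ c = c' := by
  have hm : ∀ x, x ≠ 0 → ((x = a ∨ x = b ∨ x = c) ↔ (x = a' ∨ x = b' ∨ x = c')) := by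
    intro x hx
    have := congrArg (fun s => x ∈ s) h
    simpa [hx] using this
  simp only [Multiset.insert_eq_cons, ← Multiset.cons_zero, Multiset.filter_cons,
    Multiset.filter_zero] at h
  have hs := congrArg Multiset.sum h
  have hc := congrArg Multiset.card h
  clear h
  simp only [apply_ite Multiset.sum, apply_ite Multiset.card,
    Multiset.sum_add, Multiset.card_add, Multiset.sum_singleton,
    Multiset.card_singleton, Multiset.sum_zero, Multiset.card_zero,
    Multiset.cons_zero] at hs hc
  have hs : a + b + c = a' + b' + c' := by
    split_ifs at hs <;> omega
  have ha := hm a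
  have ha' := hm a'
  have hcc := hm c
  have hcc' := hm c'
  clear hm
  have e1 : a = a' := by omega
  have e2 : c = c' := by
    split_ifs at hc <;> omega
  omega

lemma pBdd_eq (n N : ℕ) : pBdd (n : ℤ) 3 N = (triS n N).card := by
  unfold pBdd
  rw [if_pos (by positivity), Int.toNat_natCast, ← Nat.card_eq_finsetCard]
  symm
  refine Nat.card_congr (Equiv.ofBijective (fun t => ⟨Nat.Partition.ofSums n
    {t.1.1, t.1.2.1, t.1.2.2} ?_, ?_, ?_⟩) ⟨?_, ?_⟩)
  · obtain ⟨⟨a, b, c⟩, h⟩ := t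
    rw [mem_triS] at h
    simp; omega
  · refine (Multiset.card_le_card (Multiset.filter_le (· ≠ 0)
      ({t.1.1, t.1.2.1, t.1.2.2} : Multiset ℕ))).trans ?_
    simp
  · obtain ⟨⟨a, b, c⟩, h⟩ := t
    rw [mem_triS] at h
    intro i hi
    have := Multiset.mem_of_le (Multiset.filter_le (· ≠ 0) ({a, b, c} : Multiset ℕ)) hi
    simp at this
    omega
  · rintro ⟨⟨a, b, c⟩, h⟩ ⟨⟨a', b', c'⟩, h'⟩ e
    rw [mem_triS] at h h'
    have e2 := congrArg (fun x => x.1.parts) e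
    have := tri_inj a b c a' b' c' (by omega) (by omega) (by omega) (by omega) e2
    simp [this]
  · rintro ⟨π, h3, hN⟩
    have key : ∃ a b c, b ≤ a ∧ c ≤ b ∧ a ≤ N ∧ a + b + c = n ∧
        ({a, b, c} : Multiset ℕ).filter (· ≠ 0) = π.parts := by
      have hsum := π.parts_sum
      have hpos : ∀ i ∈ π.parts, 0 < i := fun i hi => π.parts_pos hi
      generalize π.parts = s at *
      have hz : ∃ x y z : ℕ, ({x, y, z} : Multiset ℕ) = s + Multiset.replicate (3 - s.card) 0 := by
        have : (s + Multiset.replicate (3 - s.card) 0).card = 3 := by simp; omega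
        obtain ⟨x, y, z, h⟩ := Multiset.card_eq_three.1 this
        exact ⟨x, y, z, h.symm⟩
      obtain ⟨x, y, z, h⟩ := hz
      have hf : ({x, y, z} : Multiset ℕ).filter (· ≠ 0) = s := by
        rw [h, Multiset.filter_add, Multiset.filter_eq_self.2 (fun i hi => (hpos i hi).ne'),
          Multiset.filter_eq_nil.2]
        · simp
        · intro i hi
          simp [Multiset.eq_of_mem_replicate hi]
      have hs : x + (y + z) = n := by
        have := congrArg Multiset.sum h
        simpa [hsum] using this
      have hb : ∀ i ∈ ({x, y, z} : Multiset ℕ), i ≤ N := by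
        intro i hi
        rw [h, Multiset.mem_add] at hi
        rcases hi with hi | hi
        · exact hN i hi
        · simp [Multiset.eq_of_mem_replicate hi]
      simp only [Multiset.insert_eq_cons, Multiset.mem_cons, Multiset.mem_singleton,
        forall_eq_or_imp, forall_eq] at hb
      have p1 : ∀ u v w : ℕ, ({u, v, w} : Multiset ℕ) = {v, u, w} :=
        fun u v w => Multiset.cons_swap _ _ _
      have p2 : ∀ u v w : ℕ, ({u, v, w} : Multiset ℕ) = {u, w, v} :=
        fun u v w => congrArg (Multiset.cons u) (Multiset.pair_comm v w)
      rcases le_total x y with h1 | h1 <;> rcases le_total y z with h2 | h2 <;>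
        rcases le_total x z with h4 | h4
      · exact ⟨z, y, x, by omega, by omega, by omega, by omega, by rw [p1, p2, p1]; exact hf⟩
      · exact ⟨z, y, x, by omega, by omega, by omega, by omega, by rw [p1, p2, p1]; exact hf⟩
      · exact ⟨y, z, x, by omega, by omega, by omega, by omega, by rw [p2, p1]; exact hf⟩
      · exact ⟨y, x, z, by omega, by omega, by omega, by omega, by rw [p1]; exact hf⟩
      · exact ⟨z, x, y, by omega, by omega, by omega, by omega, by rw [p1, p2]; exact hf⟩
      · exact ⟨x, z, y, by omega, by omega, by omega, by omega, by rw [p2]; exact hf⟩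
      · exact ⟨x, y, z, by omega, by omega, by omega, by omega, hf⟩
      · exact ⟨x, y, z, by omega, by omega, by omega, by omega, hf⟩
    obtain ⟨a, b, c, h1, h2, h4, h5, h6⟩ := key
    refine ⟨⟨(a, b, c), (mem_triS _ _ _ _ _).2 ⟨h4, h1, h2, h5⟩⟩, ?_⟩
    apply Subtype.ext
    apply Nat.Partition.ext
    exact h6

lemma step (n N : ℕ) :
    (triS (n+1) N).card + ((triS n N).filter (fun t => t.1 = N)).card =
    (triS n N).card + ((triS (n+1) N).filter (fun t => t.1 = t.2.1)).card := by
  have h1 := Finset.card_filter_add_card_filter_not (s := triS n N) (fun t => t.1 = N)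
  have h2 := Finset.card_filter_add_card_filter_not (s := triS (n+1) N) (fun t => t.1 = t.2.1)
  have h3 : ((triS n N).filter (fun t => ¬ t.1 = N)).card =
      ((triS (n+1) N).filter (fun t => ¬ t.1 = t.2.1)).card := by
    refine Finset.card_nbij' (fun t => (t.1 + 1, t.2.1, t.2.2)) (fun t => (t.1 - 1, t.2.1, t.2.2))
      ?_ ?_ ?_ ?_
    · rintro ⟨a, b, c⟩ h
      simp [mem_triS] at h ⊢
      omega
    · rintro ⟨a, b, c⟩ h
      simp [mem_triS] at h ⊢
      omega
    · rintro ⟨a, b, c⟩ h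
      simp
    · rintro ⟨a, b, c⟩ h
      simp [mem_triS] at h ⊢
      omega
  omega

lemma cardD (n N m : ℕ) (hm : 2 * m ≤ n + 2 - N) (hm' : n + 2 - N ≤ 2 * m + 1)
    (hn : n ≤ 2 * N) (h0 : N ≤ n + 1) :
    ((triS n N).filter (fun t => t.1 = N)).card = m := by
  rw [← Finset.card_range m]
  refine Finset.card_nbij' (fun t => t.2.2) (fun c => (N, n - N - c, c)) ?_ ?_ ?_ ?_
  · rintro ⟨a, b, c⟩ h
    simp [mem_triS] at h ⊢
    omega
  · intro c h
    simp [mem_triS] at h ⊢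
    omega
  · rintro ⟨a, b, c⟩ h
    simp [mem_triS] at h ⊢
    omega
  · intro c h
    simp

lemma cardE (n N : ℕ) (hn : n ≤ 2 * N) :
    ((triS n N).filter (fun t => t.1 = t.2.1)).card = n / 2 + 1 - (n + 2) / 3 := by
  rw [← Nat.card_Icc]
  refine Finset.card_nbij' (fun t => t.1) (fun a => (a, a, n - 2 * a)) ?_ ?_ ?_ ?_
  · rintro ⟨a, b, c⟩ h
    simp [mem_triS] at h ⊢
    omega
  · intro c h
    simp [mem_triS] at h ⊢
    omega
  · rintro ⟨a, b, c⟩ h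
    simp [mem_triS] at h ⊢
    omega
  · intro c h
    simp

theorem stmt11 (N : ℕ) :
    (pBdd (((3 * N / 2 : ℕ) : ℤ) - 1) 3 N : ℤ) - pBdd (((3 * N / 2 : ℕ) : ℤ) - 2) 3 N =
      if N % 4 = 0 then 0 else 1 := by
  rcases Nat.lt_or_ge N 2 with h | h
  · interval_cases N
    · simp [pBdd]
    · have h1 : (((3 * 1 / 2 : ℕ) : ℤ) - 1) = ((0 : ℕ) : ℤ) := by norm_num
      have h2 : pBdd (((3 * 1 / 2 : ℕ) : ℤ) - 2) 3 1 = 0 := by norm_num [pBdd]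
      rw [h1, h2, pBdd_eq]
      decide
  · obtain ⟨n, hn⟩ : ∃ n, 3 * N / 2 = n + 2 := ⟨3 * N / 2 - 2, by omega⟩
    have h1 : (((3 * N / 2 : ℕ) : ℤ) - 1) = ((n + 1 : ℕ) : ℤ) := by rw [hn]; push_cast; ring
    have h2 : (((3 * N / 2 : ℕ) : ℤ) - 2) = ((n : ℕ) : ℤ) := by rw [hn]; push_cast; ring
    rw [h1, h2, pBdd_eq, pBdd_eq]
    have hs := step n N
    rw [cardE _ _ (by omega), cardD n N ((n + 2 - N) / 2) (by omega) (by omega) (by omega)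
      (by omega)] at hs
    split_ifs <;> omega
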